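/- arXiv:math/0403427 — 3 statements merged into one kernel-verified Lean document; each statement's English description precedes it below -/
import Mathlib

section
/- Let X be a nonempty compact connected Hausdorff space and f : X → X a homeomorphism. Let n ≥ 1 and let N_1, …, N_n be pairwise disjoint compact proper subsets of X, each with nonempty interior. Suppose the index set {1, …, n} is partitioned into two sets A and R such that: for i ∈ A one has f(N_i) ⊆ int(N_i) and S_i := ⋂_{h≥1} f^h(N_i), while for j ∈ R one has f^{-1}(N_j) ⊆ int(N_j) and S_j := ⋂_{h≥1} f^{-h}(N_j). Assume that the nonwandering set Ω(f) equals S_1 ∪ … ∪ S_n, and assume that both X ∖ ⋃_{j∈R} S_j and X ∖ ⋃_{i∈A} S_i are connected. Then n = 2 and A and R each consist of exactly one index; that is, Ω(f) is the union of exactly one attractor of f and one attractor of f^{-1}. (This is Lemma 1 of the paper, stated in topological form; in the paper the connectivity hypotheses hold automatically because each S_i is a Smale solenoid in a closed 3-manifold.) -/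
/-- The nonwandering set of a map `f`: points `x` such that for every neighborhood `U`
of `x` there are infinitely many positive integers `n` with `f^n(U) ∩ U ≠ ∅`. -/
def nonwanderingSet {X : Type*} [TopologicalSpace X] (f : X → X) : Set X :=
  {x | ∀ U ∈ nhds x, {n : ℕ | 0 < n ∧ ((f^[n]) '' U ∩ U).Nonempty}.Infinite}

/-!
The basins of the attracting regions are open and pairwise disjoint. In a compact space every
forward orbit accumulates at a nonwandering point, hence enters one of the regions infinitely
often: either it is absorbed by an attracting region, or it keeps returning to a repelling region,
which it then never leaves, so that it starts in the repeller. Hence the basins partition the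
complement of the repellers; as this complement is connected, there is exactly one basin. Applying
this to the inverse of `f` shows that there is exactly one repeller.
-/

section

open Filter Function Set

variable {X ι : Type*} [TopologicalSpace X]

theorem image_symm_iterate_eq_preimage_iterate (f : X ≃ₜ X) (k : ℕ) (s : Set X) :
    f.symm^[k] '' s = f^[k] ⁻¹' s :=
  congrFun (image_eq_preimage_of_inverse (LeftInverse.iterate f.apply_symm_apply k)
    (LeftInverse.iterate f.symm_apply_apply k)) s

theorem subsingleton_of_isPreconnected_subset_biUnion {s : Set X} {U : ι → Set X} {A : Set ι}
    (hs : IsPreconnected s) (hopen : ∀ i ∈ A, IsOpen (U i)) (hdisj : A.PairwiseDisjoint U)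
    (hcover : s ⊆ ⋃ i ∈ A, U i) (hmeet : ∀ i ∈ A, (s ∩ U i).Nonempty) : A.Subsingleton := by
  intro i hi j hj
  by_contra hij
  have hcover' : s ⊆ U i ∪ ⋃ l ∈ A \ {i}, U l := by
    rwa [← biUnion_insert, insert_sdiff_self_of_mem hi]
  have hmeet' : (s ∩ ⋃ l ∈ A \ {i}, U l).Nonempty :=
    (hmeet j hj).mono (inter_subset_inter_right s
      (subset_biUnion_of_mem (u := U) ⟨hj, Ne.symm hij⟩))
  obtain ⟨x, -, hxi, hx⟩ := hs _ _ (hopen i hi) (isOpen_biUnion fun l hl => hopen l hl.1)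
    hcover' (hmeet i hi) hmeet'
  obtain ⟨l, ⟨hl, hli⟩, hxl⟩ := mem_iUnion₂.1 hx
  exact (hdisj hi hl (Ne.symm hli)).ne_of_mem hxi hxl rfl

theorem nonwanderingSet_symm (f : X ≃ₜ X) : nonwanderingSet f.symm = nonwanderingSet f := by
  simp only [nonwanderingSet, image_symm_iterate_eq_preimage_iterate, image_inter_nonempty_iff]
  simp only [inter_comm]

theorem mem_nonwanderingSet_of_mapClusterPt {f : X → X} {x y : X}
    (hy : MapClusterPt y atTop fun k : ℕ => f^[k] x) : y ∈ nonwanderingSet f := by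
  intro U hU
  have hvisits := frequently_atTop.1 (hy.frequently hU)
  obtain ⟨k, -, hk⟩ := hvisits 0
  refine infinite_of_forall_exists_gt fun m => ?_
  obtain ⟨l, hl, hlU⟩ := hvisits (k + m + 1)
  refine ⟨l - k, ⟨by omega, f^[l] x, ⟨f^[k] x, hk, ?_⟩, hlU⟩, by omega⟩
  rw [← iterate_add_apply, Nat.sub_add_cancel (by omega)]

/-- `N` is mapped by `f` into its own interior. Unlike in the usual notion of a trapping region,
`N` need not be compact. -/
def IsTrappingRegion (f : X → X) (N : Set X) : Prop :=
  f '' N ⊆ interior N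

/-- The attractor of `f` cut out by `N`. The repeller of a homeomorphism `f` cut out by `N` is
`attractor f.symm N`. -/
def attractor (f : X → X) (N : Set X) : Set X :=
  ⋂ h ∈ {h : ℕ | 1 ≤ h}, f^[h] '' N

/-- The basin of attraction of `N`: the points whose forward orbit enters the interior of `N`. For
a trapping region such an orbit stays in `N` from then on. -/
def basin (f : X → X) (N : Set X) : Set X :=
  ⋃ k : ℕ, f^[k] ⁻¹' interior N

theorem isOpen_basin {f : X → X} (hf : Continuous f) (N : Set X) : IsOpen (basin f N) :=
  isOpen_iUnion fun k => isOpen_interior.preimage (hf.iterate k)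

theorem mem_attractor_symm {f : X ≃ₜ X} {N : Set X} {x : X} :
    x ∈ attractor f.symm N ↔ ∀ k ≥ 1, f^[k] x ∈ N := by
  simp only [attractor, image_symm_iterate_eq_preimage_iterate, mem_iInter, mem_preimage,
    mem_ofPred_eq, ge_iff_le]

namespace IsTrappingRegion

theorem mapsTo {f : X → X} {N : Set X} (hN : IsTrappingRegion f N) : MapsTo f N N :=
  mapsTo_iff_image_subset.2 (hN.trans interior_subset)

theorem attractor_subset_interior {f : X → X} {N : Set X} (hN : IsTrappingRegion f N) :
    attractor f N ⊆ interior N :=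
  (biInter_subset_of_mem (mem_ofPred.2 le_rfl)).trans hN

theorem subset_basin {f : X → X} {N : Set X} (hN : IsTrappingRegion f N) : N ⊆ basin f N :=
  fun _ hx => mem_iUnion.2 ⟨1, hN (mem_image_of_mem f hx)⟩

theorem eventually_iterate_mem {f : X → X} {N : Set X} (hN : IsTrappingRegion f N) {x : X}
    (hx : x ∈ basin f N) : ∀ᶠ k in atTop, f^[k] x ∈ N := by
  obtain ⟨k, hk⟩ := mem_iUnion.1 hx
  filter_upwards [eventually_ge_atTop k] with l hkl
  rw [← Nat.sub_add_cancel hkl, iterate_add_apply]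
  exact hN.mapsTo.iterate (l - k) (interior_subset hk)

theorem disjoint_basin {f : X → X} {M N : Set X} (hM : IsTrappingRegion f M)
    (hN : IsTrappingRegion f N) (hMN : Disjoint M N) : Disjoint (basin f M) (basin f N) := by
  refine disjoint_left.2 fun x hxM hxN => ?_
  obtain ⟨k, hkM, hkN⟩ :=
    ((hM.eventually_iterate_mem hxM).and (hN.eventually_iterate_mem hxN)).exists
  exact disjoint_left.1 hMN hkM hkN

theorem disjoint_basin_attractor_symm {f : X ≃ₜ X} {M N : Set X} (hM : IsTrappingRegion f M)
    (hMN : Disjoint M N) : Disjoint (basin f M) (attractor f.symm N) := by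
  refine disjoint_left.2 fun x hxM hxN => ?_
  obtain ⟨k, hkM, hk⟩ := ((hM.eventually_iterate_mem hxM).and (eventually_ge_atTop 1)).exists
  exact disjoint_left.1 hMN hkM (mem_attractor_symm.1 hxN k hk)

theorem mem_attractor_symm_of_frequently {f : X ≃ₜ X} {N : Set X}
    (hN : IsTrappingRegion f.symm N) {x : X} (hx : ∃ᶠ k in atTop, f^[k] x ∈ N) :
    x ∈ attractor f.symm N := by
  refine mem_attractor_symm.2 fun k _ => ?_
  obtain ⟨l, hkl, hl⟩ := frequently_atTop.1 hx k
  rw [← Nat.sub_add_cancel hkl, iterate_add_apply] at hl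
  rw [← LeftInverse.iterate f.symm_apply_apply (l - k) (f^[k] x)]
  exact hN.mapsTo.iterate (l - k) hl

end IsTrappingRegion

/-- The nonwandering set of `f` is covered by sets `S i` cut out by pairwise disjoint trapping
regions `N i`, where `S i` is an attractor of `f` for `i ∈ A` and an attractor of `f.symm`, that is,
a repeller of `f`, for `i ∈ R`. -/
structure IsAttractorRepellerCover (f : X ≃ₜ X) (N S : ι → Set X) (A R : Set ι) : Prop where
  union_eq_univ : A ∪ R = univ
  disjoint : Disjoint A R
  pairwise_disjoint : Pairwise fun i j => Disjoint (N i) (N j)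
  attracting : ∀ i ∈ A, IsTrappingRegion f (N i) ∧ S i = attractor f (N i)
  repelling : ∀ j ∈ R, IsTrappingRegion f.symm (N j) ∧ S j = attractor f.symm (N j)
  nonwanderingSet_subset : nonwanderingSet f ⊆ ⋃ i, S i

namespace IsAttractorRepellerCover

variable {f : X ≃ₜ X} {N S : ι → Set X} {A R : Set ι}

theorem symm (h : IsAttractorRepellerCover f N S A R) :
    IsAttractorRepellerCover f.symm N S R A where
  union_eq_univ := (union_comm R A).trans h.union_eq_univ
  disjoint := h.disjoint.symm
  pairwise_disjoint := h.pairwise_disjoint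
  attracting := h.repelling
  repelling := h.attracting
  nonwanderingSet_subset := (nonwanderingSet_symm f).trans_subset h.nonwanderingSet_subset

theorem mem_or_mem (h : IsAttractorRepellerCover f N S A R) (i : ι) : i ∈ A ∨ i ∈ R :=
  h.union_eq_univ.ge (mem_univ i)

theorem subset_interior (h : IsAttractorRepellerCover f N S A R) (i : ι) :
    S i ⊆ interior (N i) := by
  rcases h.mem_or_mem i with hi | hi
  · exact (h.attracting i hi).2.trans_subset (h.attracting i hi).1.attractor_subset_interior
  · exact (h.repelling i hi).2.trans_subset (h.repelling i hi).1.attractor_subset_interior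

theorem exists_frequently_iterate_mem_interior [CompactSpace X]
    (h : IsAttractorRepellerCover f N S A R) (x : X) :
    ∃ i, ∃ᶠ k in atTop, f^[k] x ∈ interior (N i) := by
  obtain ⟨y, hy⟩ := exists_clusterPt_of_compactSpace (map (fun k : ℕ => f^[k] x) atTop)
  obtain ⟨i, hyi⟩ :=
    mem_iUnion.1 (h.nonwanderingSet_subset (mem_nonwanderingSet_of_mapClusterPt hy))
  exact ⟨i, MapClusterPt.frequently hy (isOpen_interior.mem_nhds (h.subset_interior i hyi))⟩

theorem compl_biUnion_repellers_eq_biUnion_basin [CompactSpace X]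
    (h : IsAttractorRepellerCover f N S A R) : (⋃ j ∈ R, S j)ᶜ = ⋃ i ∈ A, basin f (N i) := by
  refine Subset.antisymm (fun x hx => ?_) (iUnion₂_subset fun i hi => ?_)
  · obtain ⟨i, hvisits⟩ := h.exists_frequently_iterate_mem_interior x
    rcases h.mem_or_mem i with hi | hi
    · exact mem_biUnion hi (mem_iUnion.2 hvisits.exists)
    · have hxS : x ∈ S i := (h.repelling i hi).2.ge <|
        (h.repelling i hi).1.mem_attractor_symm_of_frequently <|
          hvisits.mono fun _ hk => interior_subset hk
      exact absurd (mem_biUnion hi hxS) hx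
  · refine subset_compl_iff_disjoint_right.2 (disjoint_iUnion₂_right.2 fun j hj => ?_)
    rw [(h.repelling j hj).2]
    exact (h.attracting i hi).1.disjoint_basin_attractor_symm
      (h.pairwise_disjoint (h.disjoint.ne_of_mem hi hj))

theorem ncard_attracting_eq_one [CompactSpace X] (h : IsAttractorRepellerCover f N S A R)
    (hN : ∀ i ∈ A, (N i).Nonempty) (hconn : IsConnected (⋃ j ∈ R, S j)ᶜ) : A.ncard = 1 := by
  rw [h.compl_biUnion_repellers_eq_biUnion_basin] at hconn
  have hbasin : ∀ i ∈ A, (basin f (N i)).Nonempty := fun i hi =>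
    (hN i hi).mono (h.attracting i hi).1.subset_basin
  have hdisj : A.PairwiseDisjoint fun i => basin f (N i) := fun i hi j hj hij =>
    (h.attracting i hi).1.disjoint_basin (h.attracting j hj).1 (h.pairwise_disjoint hij)
  have hsub : A.Subsingleton :=
    subsingleton_of_isPreconnected_subset_biUnion hconn.isPreconnected
      (fun i _ => isOpen_basin f.continuous (N i)) hdisj Subset.rfl fun i hi =>
        (hbasin i hi).mono (subset_inter (subset_biUnion_of_mem (u := fun i => basin f (N i)) hi)
          Subset.rfl)
  have hne : A.Nonempty := (nonempty_biUnion.1 hconn.nonempty).imp fun _ hi => hi.1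
  exact ncard_eq_one.2 (exists_eq_singleton_iff_nonempty_subsingleton.2 ⟨hne, hsub⟩)

end IsAttractorRepellerCover

theorem one_attractor_one_repeller_general [CompactSpace X] {f : X ≃ₜ X} {N S : ι → Set X}
    {A R : Set ι} (h : IsAttractorRepellerCover f N S A R) (hN : ∀ i, (N i).Nonempty)
    (hconnR : IsConnected (⋃ j ∈ R, S j)ᶜ) (hconnA : IsConnected (⋃ i ∈ A, S i)ᶜ) :
    Nat.card ι = 2 ∧ A.ncard = 1 ∧ R.ncard = 1 := by
  have hA : A.ncard = 1 := h.ncard_attracting_eq_one (fun i _ => hN i) hconnR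
  have hR : R.ncard = 1 := h.symm.ncard_attracting_eq_one (fun i _ => hN i) hconnA
  have hAfin : A.Finite := finite_of_ncard_pos (by omega)
  have hRfin : R.Finite := finite_of_ncard_pos (by omega)
  refine ⟨?_, hA, hR⟩
  rw [← ncard_univ, ← h.union_eq_univ, ncard_union_eq h.disjoint hAfin hRfin, hA, hR]

end

/-- Lemma 1 of the paper (topological form): if the nonwandering set of a homeomorphism of a
nonempty compact connected Hausdorff space is a disjoint union of attractors of `f` (indices in
`A`) and attractors of `f⁻¹` (indices in `R`) arising from pairwise disjoint compact proper
trapping regions with nonempty interior, and the complements of the union of the repelling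
(resp. attracting) pieces are connected, then there is exactly one attractor and exactly one
repeller. -/
theorem one_attractor_one_repeller {X : Type*} [TopologicalSpace X] [CompactSpace X]
    [ConnectedSpace X] [T2Space X] [Nonempty X] (f : X ≃ₜ X)
    {n : ℕ} (hn : 1 ≤ n) (N : Fin n → Set X) (S : Fin n → Set X)
    (hcompact : ∀ i, IsCompact (N i))
    (hproper : ∀ i, N i ≠ Set.univ)
    (hint : ∀ i, (interior (N i)).Nonempty)
    (hdisj : Pairwise fun i j => Disjoint (N i) (N j))
    (A R : Finset (Fin n)) (hpart : A ∪ R = Finset.univ) (hAR : Disjoint A R)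
    (hA : ∀ i ∈ A, (⇑f) '' (N i) ⊆ interior (N i) ∧
      S i = ⋂ h ∈ {h : ℕ | 1 ≤ h}, (⇑f)^[h] '' (N i))
    (hR : ∀ j ∈ R, (⇑f.symm) '' (N j) ⊆ interior (N j) ∧
      S j = ⋂ h ∈ {h : ℕ | 1 ≤ h}, (⇑f.symm)^[h] '' (N j))
    (hΩ : nonwanderingSet ⇑f = ⋃ i, S i)
    (hconnR : IsConnected (Set.univ \ ⋃ j ∈ R, S j))
    (hconnA : IsConnected (Set.univ \ ⋃ i ∈ A, S i)) :
    n = 2 ∧ A.card = 1 ∧ R.card = 1 := by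
  have hcover : IsAttractorRepellerCover f N S (A : Set (Fin n)) R :=
    ⟨by rw [← Finset.coe_union, hpart, Finset.coe_univ], Finset.disjoint_coe.2 hAR, hdisj, hA, hR,
      hΩ.subset⟩
  simpa using one_attractor_one_repeller_general hcover (fun i => (hint i).mono interior_subset)
    (by rwa [Set.compl_eq_univ_sdiff]) (by rwa [Set.compl_eq_univ_sdiff])
end

section
/- Let X be a compact Hausdorff space and f : X → X a homeomorphism. Let N_1 and N_2 be disjoint compact subsets with f(N_1) ⊆ int(N_1) and f^{-1}(N_2) ⊆ int(N_2), and set S_1 = ⋂_{h≥1} f^h(N_1) and S_2 = ⋂_{h≥1} f^{-h}(N_2). If the nonwandering set satisfies Ω(f) ⊆ S_1 ∪ S_2, then ⋃_{h≥1} f^{-h}(int(N_1)) = X ∖ S_2; that is, the basin of the attractor S_1 is exactly the complement of the repeller S_2. (This is the first assertion in the proof of Lemma 2 of the paper.) -/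
/-!
By compactness every forward orbit accumulates somewhere, and only at nonwandering points, so it
eventually stays in any open set containing the nonwandering set, here `interior N₁ ∪ interior N₂`.
As `N₂` is backward invariant, an orbit that is outside `N₂` once is outside `N₂` forever after.
Hence an orbit starting off the repeller ends up in `interior N₁`.
-/

open Filter Set

theorem image_iterate_eq_preimage_iterate_of_inverse {α : Type*} {f g : α → α}
    (hfg : Function.LeftInverse f g) (hgf : Function.RightInverse f g) (n : ℕ) (A : Set α) :
    g^[n] '' A = f^[n] ⁻¹' A :=
  congrFun (image_eq_preimage_of_inverse (hfg.iterate n) (hgf.iterate n)) A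

theorem eventually_iterate_notMem {α : Type*} {f : α → α} {A : Set α} (hA : f ⁻¹' A ⊆ A)
    {x : α} {m : ℕ} (hm : f^[m] x ∉ A) : ∀ᶠ n in atTop, f^[n] x ∉ A := by
  have mapsTo_compl : MapsTo f Aᶜ Aᶜ := fun _ hy hfy ↦ hy (hA hfy)
  filter_upwards [eventually_ge_atTop m] with n hmn
  rw [← Nat.sub_add_cancel hmn, Function.iterate_add_apply]
  exact mapsTo_compl.iterate (n - m) hm

section

variable {X : Type*} [TopologicalSpace X] {f : X → X}

theorem iInter_image_iterate_subset_interior {N : Set X} (hN : f '' N ⊆ interior N) :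
    ⋂ h ∈ {h : ℕ | 1 ≤ h}, f^[h] '' N ⊆ interior N :=
  (biInter_subset_of_mem (mem_ofPred.2 le_rfl)).trans hN

theorem mem_nonwanderingSet_of_mapClusterPt_iterate {x y : X}
    (hy : MapClusterPt y atTop fun n ↦ f^[n] x) : y ∈ nonwanderingSet f := by
  intro U hU
  have visits : ∃ᶠ n in atTop, f^[n] x ∈ U := hy.frequently hU
  obtain ⟨m, hm⟩ := visits.exists
  refine infinite_of_forall_exists_gt fun a ↦ ?_
  obtain ⟨n, hn, hnU⟩ := frequently_atTop.1 visits (m + a + 1)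
  have return_eq : f^[n - m] (f^[m] x) = f^[n] x := by
    rw [← Function.iterate_add_apply, Nat.sub_add_cancel (by lia)]
  exact ⟨n - m, ⟨by lia, f^[n] x, ⟨f^[m] x, hm, return_eq⟩, hnU⟩, by lia⟩

theorem eventually_iterate_mem_of_nonwanderingSet_subset [CompactSpace X] {U : Set X}
    (hU : IsOpen U) (hΩ : nonwanderingSet f ⊆ U) (x : X) : ∀ᶠ n in atTop, f^[n] x ∈ U := by
  by_contra hx
  obtain ⟨y, hyU, hy⟩ :=
    hU.isClosed_compl.isCompact.exists_mapClusterPt_of_frequently (not_eventually.1 hx)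
  exact hyU (hΩ (mem_nonwanderingSet_of_mapClusterPt_iterate hy))

theorem basin_eq_compl_repeller_general [CompactSpace X] {N₁ N₂ : Set X}
    (hdisj : Disjoint N₁ N₂) (hN₂ : f ⁻¹' N₂ ⊆ N₂)
    (hΩ : nonwanderingSet f ⊆ interior N₁ ∪ interior N₂) :
    ⋃ h ∈ {h : ℕ | 1 ≤ h}, f^[h] ⁻¹' interior N₁ = (⋂ h ∈ {h : ℕ | 1 ≤ h}, f^[h] ⁻¹' N₂)ᶜ := by
  rw [compl_iInter₂]
  apply Subset.antisymm
  · exact iUnion₂_mono fun _ _ ↦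
      preimage_mono (interior_subset.trans hdisj.subset_compl_right)
  · refine iUnion₂_subset fun m _ x hm ↦ ?_
    have mem_interiors : ∀ᶠ n in atTop, f^[n] x ∈ interior N₁ ∪ interior N₂ :=
      eventually_iterate_mem_of_nonwanderingSet_subset (isOpen_interior.union isOpen_interior) hΩ x
    obtain ⟨n, hnU, hnN₂, hn⟩ := (mem_interiors.and
      ((eventually_iterate_notMem hN₂ hm).and (eventually_ge_atTop 1))).exists
    exact mem_biUnion hn (hnU.resolve_right fun h ↦ hnN₂ (interior_subset h))

end

/-- First assertion in the proof of Lemma 2: if the nonwandering set is contained in the union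
of the attractor `S₁` and the repeller `S₂`, then the basin of `S₁` is exactly the complement
of `S₂`. -/
theorem basin_eq_compl_repeller {X : Type*} [TopologicalSpace X] [CompactSpace X] [T2Space X]
    (f : X ≃ₜ X) (N₁ N₂ : Set X)
    (h₁comp : IsCompact N₁) (h₂comp : IsCompact N₂) (hdisj : Disjoint N₁ N₂)
    (h₁trap : (⇑f) '' N₁ ⊆ interior N₁) (h₂trap : (⇑f.symm) '' N₂ ⊆ interior N₂)
    (S₁ S₂ : Set X)
    (hS₁ : S₁ = ⋂ h ∈ {h : ℕ | 1 ≤ h}, (⇑f)^[h] '' N₁)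
    (hS₂ : S₂ = ⋂ h ∈ {h : ℕ | 1 ≤ h}, (⇑f.symm)^[h] '' N₂)
    (hΩ : nonwanderingSet ⇑f ⊆ S₁ ∪ S₂) :
    (⋃ h ∈ {h : ℕ | 1 ≤ h}, (⇑f.symm)^[h] '' (interior N₁)) = S₂ᶜ := by
  have hN₂ : f ⁻¹' N₂ ⊆ N₂ := f.image_symm ▸ h₂trap.trans interior_subset
  have hΩ_interior : nonwanderingSet f ⊆ interior N₁ ∪ interior N₂ :=
    hΩ.trans <| union_subset_union (hS₁ ▸ iInter_image_iterate_subset_interior h₁trap)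
      (hS₂ ▸ iInter_image_iterate_subset_interior h₂trap)
  simpa only [hS₂, image_iterate_eq_preimage_iterate_of_inverse f.apply_symm_apply
    f.symm_apply_apply] using basin_eq_compl_repeller_general hdisj hN₂ hΩ_interior
end

section
/- Let X be a compact Hausdorff space and f : X → X a homeomorphism. Suppose N_1 and N_2 are compact subsets with X = N_1 ∪ N_2, f^{-1}(N_1) ⊆ int(N_1), and f(N_2) ⊆ int(N_2). Set S_1 = ⋂_{h≥1} f^{-h}(N_1) and S_2 = ⋂_{h≥1} f^h(N_2). Then every point x ∉ S_1 is attracted to S_2 under forward iteration: for every open set O containing S_2 there exists n_0 such that f^n(x) ∈ O for all n ≥ n_0. (This is the final assertion in the proof of the IF part of Theorem 2 of the paper.) -/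
/-!
A point outside the repeller leaves `N₁` at some positive time, hence enters `N₂` because the two
sets cover the space. From then on its orbit runs through the images `f^[n] '' N₂`, which form a
decreasing sequence of compact sets. By compactness they are eventually contained in any given
neighbourhood of their intersection, the attractor.
-/

open Filter Function Set Topology

section Dynamics

variable {X : Type*} {f : X → X} {s : Set X}

theorem image_iterate_eq_preimage_iterate_of_inverse_s6 {g : X → X} (hl : LeftInverse g f)
    (hr : RightInverse g f) (n : ℕ) : f^[n] '' s = g^[n] ⁻¹' s :=
  congrFun (image_eq_preimage_of_inverse (hl.iterate n) (hr.iterate n)) s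

theorem antitone_image_iterate (hs : MapsTo f s s) : Antitone fun n ↦ f^[n] '' s := by
  refine antitone_nat_of_succ_le fun n ↦ ?_
  calc f^[n + 1] '' s = f^[n] '' (f '' s) := by rw [iterate_succ, image_comp]
    _ ⊆ f^[n] '' s := image_mono hs.image_subset

theorem biInter_one_le_image_iterate (hs : MapsTo f s s) :
    ⋂ n ∈ {n : ℕ | 1 ≤ n}, f^[n] '' s = ⋂ n, f^[n] '' s :=
  calc ⋂ n ∈ {n : ℕ | 1 ≤ n}, f^[n] '' s = ⋂ n, f^[n + 1] '' s :=
        iInf_ge_eq_iInf_nat_add (fun n ↦ f^[n] '' s) 1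
    _ = ⋂ n, f^[n] '' s := (antitone_image_iterate hs).iInter_nat_add 1

theorem exists_iterate_mem_of_notMem_biInter_preimage {t : Set X} {I : Set ℕ} {x : X}
    (hcover : s ∪ t = univ) (hx : x ∉ ⋂ n ∈ I, f^[n] ⁻¹' s) : ∃ n, f^[n] x ∈ t := by
  simp only [mem_iInter, mem_preimage, not_forall] at hx
  obtain ⟨n, -, hn⟩ := hx
  have hmem : f^[n] x ∈ s ∪ t := hcover ▸ mem_univ _
  exact ⟨n, hmem.resolve_left hn⟩

variable [TopologicalSpace X] [T2Space X]

theorem eventually_image_iterate_subset (hs : IsCompact s) (hf : ContinuousOn f s)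
    (hmaps : MapsTo f s s) {U : Set X} (hU : U ∈ 𝓝ˢ (⋂ n, f^[n] '' s)) :
    ∀ᶠ n in atTop, f^[n] '' s ⊆ U := by
  have hanti := antitone_image_iterate hmaps
  obtain ⟨k, hk⟩ := exists_subset_nhds_of_isCompact hanti.directed_ge
    (fun n ↦ hs.image_of_continuousOn (hf.iterate hmaps n)) (mem_nhdsSet_iff_forall.1 hU)
  filter_upwards [eventually_ge_atTop k] with n hn using (hanti hn).trans hk

theorem tendsto_iterate_nhdsSet_iInter_image (hs : IsCompact s) (hf : ContinuousOn f s)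
    (hmaps : MapsTo f s s) {x : X} {k : ℕ} (hx : f^[k] x ∈ s) :
    Tendsto (fun n ↦ f^[n] x) atTop (𝓝ˢ (⋂ n, f^[n] '' s)) := by
  refine (tendsto_add_atTop_iff_nat k).1 fun U hU ↦ mem_map.2 ?_
  filter_upwards [eventually_image_iterate_subset hs hf hmaps hU] with n hn
  rw [mem_preimage, iterate_add_apply]
  exact hn (mem_image_of_mem _ hx)

theorem attracted_to_attractor_general {N₁ N₂ : Set X} (hN₂ : IsCompact N₂)
    (hcover : N₁ ∪ N₂ = univ) (hf : ContinuousOn f N₂) (hmaps : MapsTo f N₂ N₂) {x : X}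
    (hx : x ∉ ⋂ h ∈ {h : ℕ | 1 ≤ h}, f^[h] ⁻¹' N₁) :
    Tendsto (fun n ↦ f^[n] x) atTop (𝓝ˢ (⋂ h ∈ {h : ℕ | 1 ≤ h}, f^[h] '' N₂)) := by
  obtain ⟨k, hk⟩ := exists_iterate_mem_of_notMem_biInter_preimage hcover hx
  rw [biInter_one_le_image_iterate hmaps]
  exact tendsto_iterate_nhdsSet_iInter_image hN₂ hf hmaps hk

end Dynamics

/-- If `X = N₁ ∪ N₂` with `N₁` a trapping region for `f⁻¹` and `N₂` a trapping region for `f`,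
then every point outside the repeller `S₁ = ⋂_{h ≥ 1} f^{-h}(N₁)` is attracted to the attractor
`S₂ = ⋂_{h ≥ 1} f^h(N₂)` under forward iteration. -/
theorem attracted_to_attractor {X : Type*} [TopologicalSpace X] [CompactSpace X] [T2Space X]
    (f : X ≃ₜ X) (N₁ N₂ : Set X)
    (h₁comp : IsCompact N₁) (h₂comp : IsCompact N₂) (hcover : N₁ ∪ N₂ = Set.univ)
    (h₁trap : (⇑f.symm) '' N₁ ⊆ interior N₁) (h₂trap : (⇑f) '' N₂ ⊆ interior N₂)
    (S₁ S₂ : Set X)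
    (hS₁ : S₁ = ⋂ h ∈ {h : ℕ | 1 ≤ h}, (⇑f.symm)^[h] '' N₁)
    (hS₂ : S₂ = ⋂ h ∈ {h : ℕ | 1 ≤ h}, (⇑f)^[h] '' N₂) :
    ∀ x : X, x ∉ S₁ → ∀ O : Set X, IsOpen O → S₂ ⊆ O →
      ∃ n₀ : ℕ, ∀ n ≥ n₀, (⇑f)^[n] x ∈ O := by
  intro x hx O hO hSO
  have hmaps : MapsTo f N₂ N₂ := mapsTo_iff_image_subset.2 (h₂trap.trans interior_subset)
  simp only [hS₁, image_iterate_eq_preimage_iterate_of_inverse_s6 (f := f.symm) (g := f)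
    f.apply_symm_apply f.symm_apply_apply] at hx
  exact eventually_atTop.1 (attracted_to_attractor_general h₂comp hcover f.continuous.continuousOn
    hmaps hx (hO.mem_nhdsSet.2 (hS₂ ▸ hSO)))
end
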